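/- arXiv:1507.06362 — 3 statements merged into one kernel-verified Lean document; each statement's English description precedes it below -/
import Mathlib

section
/- The Sorgenfrey line is a hereditarily Lindelöf space (every subspace is Lindelöf) which is not a charming space. -/
open Set Function TopologicalSpace

universe u

/-- A map between topological spaces is *perfect* if it is continuous, closed, and
every fiber is compact. -/
def PerfectMap {Y : Type*} {Z : Type*} [TopologicalSpace Y] [TopologicalSpace Z]
    (f : Y → Z) : Prop :=
  Continuous f ∧ IsClosedMap f ∧ ∀ z : Z, IsCompact (f ⁻¹' {z})

/-- A topological space `X` is a *Lindelöf Σ-space* if there exist a topological space `Y`,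
a continuous surjection from `Y` onto `X`, and a perfect surjection from `Y` onto some
second-countable space. -/
def IsLindelofSigma (X : Type u) [TopologicalSpace X] : Prop :=
  ∃ (Y : Type u) (tY : TopologicalSpace Y) (Z : Type u) (tZ : TopologicalSpace Z),
    @SecondCountableTopology Z tZ ∧
    (∃ f : Y → X, @Continuous Y X tY _ f ∧ Surjective f) ∧
    (∃ g : Y → Z, @PerfectMap Y Z tY tZ g ∧ Surjective g)

/-- A topological space `X` is a *charming space* if there is a subset `Y` of `X` that is a
Lindelöf Σ-space in the subspace topology and such that for every open `U ⊇ Y`,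
the set `X \ U` is a Lindelöf Σ-space in the subspace topology. -/
def IsCharming (X : Type u) [TopologicalSpace X] : Prop :=
  ∃ Y : Set X, IsLindelofSigma Y ∧
    ∀ U : Set X, IsOpen U → Y ⊆ U → IsLindelofSigma ↥(Uᶜ)

/-- A *CL-charming* space: the shell `Y` can be chosen closed. -/
def IsCLCharming (X : Type u) [TopologicalSpace X] : Prop :=
  ∃ Y : Set X, IsClosed Y ∧ IsLindelofSigma Y ∧
    ∀ U : Set X, IsOpen U → Y ⊆ U → IsLindelofSigma ↥(Uᶜ)

/-- A *CO-charming* space: the shell `Y` can be chosen compact. -/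
def IsCOCharming (X : Type u) [TopologicalSpace X] : Prop :=
  ∃ Y : Set X, IsCompact Y ∧ IsLindelofSigma Y ∧
    ∀ U : Set X, IsOpen U → Y ⊆ U → IsLindelofSigma ↥(Uᶜ)

/-- A space has a *countable network* if there is a countable family `N` of subsets such that
every point in every open set `V` is contained in a member of `N` contained in `V`. -/
def HasCountableNetwork (X : Type u) [TopologicalSpace X] : Prop :=
  ∃ N : Set (Set X), N.Countable ∧
    ∀ x : X, ∀ V : Set X, IsOpen V → x ∈ V → ∃ n ∈ N, x ∈ n ∧ n ⊆ V

/-- A topological space `X` is *weak (4,4)-structured* if there exist a topological space `Y`,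
a continuous surjection from `Y` onto `X`, and a perfect surjection from `Y` onto some
charming space. -/
def IsWeak44Structured (X : Type u) [TopologicalSpace X] : Prop :=
  ∃ (Y : Type u) (tY : TopologicalSpace Y) (M : Type u) (tM : TopologicalSpace M),
    @IsCharming M tM ∧
    (∃ f : Y → X, @Continuous Y X tY _ f ∧ Surjective f) ∧
    (∃ g : Y → M, @PerfectMap Y M tY tM g ∧ Surjective g)

/-- The Sorgenfrey line: `ℝ` with the topology generated by half-open intervals `[a, b)`. -/
def sorgenfreyTopology : TopologicalSpace ℝ :=
  TopologicalSpace.generateFrom {s : Set ℝ | ∃ a b : ℝ, s = Set.Ico a b}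

/-!
The Sorgenfrey line is `ℝ` with `𝓝[≥] x` as the neighbourhood filter of `x`, so the identity is
right-continuous as a map from `ℝ` to it, while the identity from it to `ℝ` is continuous and has a
local minimum at every point. Both halves rest on the fact that a subset of `ℝ` has only countably
many points that are one-sidedly isolated in it.

* Given a cover of `s` by Sorgenfrey open sets, the Euclidean interiors of its members leave
  uncovered only points of `s` that are isolated on the right among the uncovered ones.
* Let `f` be continuous on a Lindelöf Σ-space, with a local minimum at every point. The space has a
  countable network modulo a cover by compact sets, and compactness makes every value `f x` isolated
  on the left in the image of some member of that network. Hence `f` has countable range, and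
  Lindelöf Σ-subspaces of the Sorgenfrey line are countable. A countable set has an open
  neighbourhood in `ℝ` of finite measure, whose complement is uncountable, so no such set can
  witness that the line is charming.
-/

open Filter Topology MeasureTheory

section RightContinuous

variable {α X : Type*} [LinearOrder α] [TopologicalSpace α] [OrderTopology α]
  [SecondCountableTopology α]

lemma countable_sdiff_of_forall_mem_nhdsGT {s t : Set α} (h : ∀ x ∈ s, t ∈ 𝓝[>] x) :
    (s \ t).Countable := by
  refine (countable_setOfPred_isolated_right_within (s := s \ t)).mono fun x hx => ?_
  refine ⟨hx, empty_mem_iff_bot.1 ?_⟩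
  have ht : t ∈ 𝓝[(s \ t) ∩ Ioi x] x := nhdsWithin_mono x inter_subset_right (h x hx.1)
  have ht' : tᶜ ∈ 𝓝[(s \ t) ∩ Ioi x] x := mem_of_superset self_mem_nhdsWithin fun _ hy => hy.1.2
  simpa using inter_mem ht ht'

lemma isLindelof_image_of_continuousWithinAt_Ici {_ : TopologicalSpace X} {f : α → X}
    (hf : ∀ x, ContinuousWithinAt f (Ici x) x) (s : Set α) : IsLindelof (f '' s) := by
  refine isLindelof_of_countable_subcover fun U hUo hU => ?_
  let W := ⋃ i, interior (f ⁻¹' U i)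
  have hW : ∀ x ∈ s, W ∈ 𝓝[>] x := fun x hx => by
    obtain ⟨i, hi⟩ := mem_iUnion.1 (hU (mem_image_of_mem f hx))
    have hpre : f ⁻¹' U i ∈ 𝓝[>] x :=
      nhdsWithin_mono x Ioi_subset_Ici_self (hf x ((hUo i).mem_nhds hi))
    filter_upwards [eventually_eventually_nhdsWithin.2 hpre, self_mem_nhdsWithin] with y hy hxy
    rw [isOpen_Ioi.nhdsWithin_eq hxy] at hy
    exact mem_iUnion.2 ⟨i, mem_interior_iff_mem_nhds.2 hy⟩
  have hcount : (f '' (s \ W)).Countable := (countable_sdiff_of_forall_mem_nhdsGT hW).image f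
  obtain ⟨T₁, hT₁, hWT₁⟩ := isOpen_iUnion_countable (fun i => interior (f ⁻¹' U i))
    fun _ => isOpen_interior
  obtain ⟨T₂, hT₂, hsT₂⟩ := hcount.isLindelof.elim_countable_subcover U hUo
    ((image_mono sdiff_subset).trans hU)
  refine ⟨T₁ ∪ T₂, hT₁.union hT₂, ?_⟩
  rw [biUnion_union]
  rintro _ ⟨x, hx, rfl⟩
  by_cases hxW : x ∈ W
  · obtain ⟨i, hi, hxi⟩ := mem_iUnion₂.1 (hWT₁.ge hxW)
    have hfx : f x ∈ U i := interior_subset (s := f ⁻¹' U i) hxi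
    exact Or.inl (mem_biUnion hi hfx)
  · exact Or.inr (hsT₂ (mem_image_of_mem f ⟨hx, hxW⟩))

end RightContinuous

section LindelofSigma

variable {X : Type u} [TopologicalSpace X]

/-- `𝒩` is a network modulo some cover of `X` by compact sets: each point lies in a compact set `K`
such that every open set containing `K` also contains a member of `𝒩` that contains `K`.
A countable such family takes the place of the two maps that witness a Lindelöf Σ-space. The
members of `𝒩` need not be open. -/
def IsNetworkModCompacts (𝒩 : Set (Set X)) : Prop :=
  ∀ x, ∃ K, IsCompact K ∧ x ∈ K ∧ ∀ U, IsOpen U → K ⊆ U → ∃ N ∈ 𝒩, K ⊆ N ∧ N ⊆ U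

lemma IsLindelofSigma.exists_countable_isNetworkModCompacts (hX : IsLindelofSigma X) :
    ∃ 𝒩 : Set (Set X), 𝒩.Countable ∧ IsNetworkModCompacts 𝒩 := by
  obtain ⟨Y, _, Z, _, _, ⟨f, hf, hfs⟩, ⟨g, ⟨-, hgc, hgk⟩, -⟩⟩ := hX
  refine ⟨(fun B => f '' (g ⁻¹' B)) '' countableBasis Z, (countable_countableBasis Z).image _, ?_⟩
  intro x
  obtain ⟨y, rfl⟩ := hfs x
  refine ⟨f '' (g ⁻¹' {g y}), (hgk _).image hf, mem_image_of_mem f rfl, fun U hU hKU => ?_⟩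
  have hfiber : ∀ᶠ z in 𝓝 (g y), ∀ y' ∈ g ⁻¹' {z}, f y' ∈ U :=
    hgc.eventually_nhds_fiber _ fun y' hy' =>
      hf.continuousAt.eventually_mem (hU.mem_nhds (hKU (mem_image_of_mem f hy')))
  obtain ⟨B, hB, hyB, hBU⟩ := (isBasis_countableBasis Z).mem_nhds_iff.1 hfiber
  refine ⟨_, mem_image_of_mem _ hB, ?_, ?_⟩
  · exact image_mono (preimage_mono (singleton_subset_iff.2 hyB))
  · rintro _ ⟨y', hy', rfl⟩
    exact hBU hy' y' rfl

end LindelofSigma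

section LocalMin

lemma isOpen_preimage_Ici_of_forall_isLocalMin {α X : Type*} [Preorder α] [TopologicalSpace X]
    {f : X → α} (hmin : ∀ x, IsLocalMin f x) (c : α) : IsOpen (f ⁻¹' Ici c) :=
  isOpen_iff_mem_nhds.2 fun x hx => (hmin x).mono fun _ hy => le_trans hx hy

variable {α : Type*} {X : Type u} [LinearOrder α] [TopologicalSpace α] [TopologicalSpace X]
  {f : X → α}

lemma exists_isOpen_superset_isolated_left_image [T2Space α] (hf : Continuous f)
    (hmin : ∀ x, IsLocalMin f x) {K : Set X} (hK : IsCompact K) (c : α) :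
    ∃ U, IsOpen U ∧ K ⊆ U ∧ 𝓝[f '' U ∩ Iio c] c = ⊥ := by
  have hIci : IsOpen (f ⁻¹' Ici c) := isOpen_preimage_Ici_of_forall_isLocalMin hmin c
  have hIio : IsClosed (f ⁻¹' Iio c) := by simpa [← preimage_compl] using hIci.isClosed_compl
  have hcompact : IsCompact (f '' (K ∩ f ⁻¹' Iio c)) := (hK.inter_right hIio).image hf
  have hc : c ∉ f '' (K ∩ f ⁻¹' Iio c) := by
    rintro ⟨x, hx, rfl⟩
    exact lt_irrefl _ hx.2
  obtain ⟨V, W, hV, hW, hKV, hcW, hVW⟩ :=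
    SeparatedNhds.of_isCompact_isCompact hcompact isCompact_singleton
      (disjoint_singleton_right.2 hc)
  refine ⟨f ⁻¹' V ∪ f ⁻¹' Ici c, (hV.preimage hf).union hIci, fun x hx => ?_, ?_⟩
  · rcases lt_or_ge (f x) c with hxc | hxc
    · exact Or.inl (hKV (mem_image_of_mem f ⟨hx, hxc⟩))
    · exact Or.inr hxc
  · have hsub : f '' (f ⁻¹' V ∪ f ⁻¹' Ici c) ∩ Iio c ⊆ V := by
      rintro _ ⟨⟨x, hx | hx, rfl⟩, hxc⟩
      · exact hx
      · exact absurd hxc (not_lt.2 hx)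
    exact notMem_closure_iff_nhdsWithin_eq_bot.1 fun hcl =>
      (hVW.closure_left hW).notMem_of_mem_left (closure_mono hsub hcl) (hcW rfl)

variable [OrderTopology α] [SecondCountableTopology α]

lemma IsLindelofSigma.countable_range_of_forall_isLocalMin (hX : IsLindelofSigma X)
    (hf : Continuous f) (hmin : ∀ x, IsLocalMin f x) : (range f).Countable := by
  obtain ⟨𝒩, h𝒩, hnet⟩ := hX.exists_countable_isNetworkModCompacts
  refine (h𝒩.biUnion fun N _ =>
    countable_setOfPred_isolated_left_within (s := f '' N)).mono ?_
  rintro _ ⟨x, rfl⟩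
  obtain ⟨K, hK, hxK, hKnet⟩ := hnet x
  obtain ⟨U, hU, hKU, hiso⟩ := exists_isOpen_superset_isolated_left_image hf hmin hK (f x)
  obtain ⟨N, hN, hKN, hNU⟩ := hKnet U hU hKU
  have hisoN : 𝓝[f '' N ∩ Iio (f x)] f x = ⊥ :=
    le_bot_iff.1 (hiso ▸ nhdsWithin_mono _ (inter_subset_inter_left _ (image_mono hNU)))
  exact mem_biUnion hN ⟨mem_image_of_mem f (hKN hxK), hisoN⟩

lemma IsLindelofSigma.countable_image_of_forall_isLocalMin {s : Set X} (hs : IsLindelofSigma s)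
    (hf : Continuous f) (hmin : ∀ x, IsLocalMin f x) : (f '' s).Countable := by
  rw [image_eq_range]
  exact hs.countable_range_of_forall_isLocalMin (hf.comp continuous_subtype_val) fun x =>
    continuous_subtype_val.continuousAt.eventually (hmin x)

end LocalMin

lemma exists_isOpen_superset_not_countable_compl {α : Type*} [TopologicalSpace α]
    [MeasurableSpace α] (μ : Measure α) [μ.OuterRegular] [NullSingletonClass μ] [NeZero μ]
    {s : Set α} (hs : s.Countable) : ∃ U, IsOpen U ∧ s ⊆ U ∧ ¬ Uᶜ.Countable := by
  obtain ⟨U, hsU, hU, hμU⟩ := s.exists_isOpen_lt_of_lt (μ := μ) (μ univ) (by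
    simp [hs.measure_zero μ, NeZero.ne μ, pos_iff_ne_zero])
  exact ⟨U, hU, hsU, fun hUc => hμU.ne (measure_of_measure_compl_eq_zero (hUc.measure_zero μ))⟩

lemma not_isCharming_of_forall_isLocalMin {α : Type*} {X : Type u} [LinearOrder α]
    [TopologicalSpace α] [OrderTopology α] [SecondCountableTopology α] [MeasurableSpace α]
    (μ : Measure α) [μ.OuterRegular] [NullSingletonClass μ] [NeZero μ] {_ : TopologicalSpace X}
    {f : X → α} (hf : Continuous f) (hmin : ∀ x, IsLocalMin f x) (hsurj : Surjective f) :
    ¬ IsCharming X := by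
  rintro ⟨Y, hY, hcompl⟩
  obtain ⟨U, hU, hYU, hUc⟩ := exists_isOpen_superset_not_countable_compl μ
    (hY.countable_image_of_forall_isLocalMin hf hmin)
  have hsigma : IsLindelofSigma ↥(f ⁻¹' U)ᶜ := hcompl _ (hU.preimage hf) (image_subset_iff.1 hYU)
  have himage : f '' (f ⁻¹' U)ᶜ = Uᶜ := by rw [← preimage_compl, image_preimage_eq _ hsurj]
  exact hUc (himage ▸ hsigma.countable_image_of_forall_isLocalMin hf hmin)

lemma nhds_sorgenfreyTopology (x : ℝ) : @nhds ℝ sorgenfreyTopology x = 𝓝[≥] x := by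
  refine le_antisymm ?_ ?_
  · refine (nhdsGE_basis_Ico x).ge_iff.2 fun b hb => ?_
    exact @IsOpen.mem_nhds ℝ sorgenfreyTopology x _ (.basic _ ⟨x, b, rfl⟩) ⟨le_rfl, hb⟩
  · rw [sorgenfreyTopology, nhds_generateFrom]
    simp only [le_iInf_iff, le_principal_iff]
    rintro _ ⟨hx, a, b, rfl⟩
    exact mem_of_superset (Ico_mem_nhdsGE hx.2) (Ico_subset_Ico_left hx.1)

/-- The Sorgenfrey line is hereditarily Lindelöf but not a charming space. -/
theorem sorgenfrey_hereditarily_lindelof_not_charming :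
    (∀ s : Set ℝ, @IsLindelof ℝ sorgenfreyTopology s) ∧
    ¬ @IsCharming ℝ sorgenfreyTopology := by
  refine ⟨fun s => ?_, ?_⟩
  · have hright (x : ℝ) : @ContinuousWithinAt ℝ ℝ _ sorgenfreyTopology id (Ici x) x :=
      (nhds_sorgenfreyTopology x).ge
    exact image_id s ▸ isLindelof_image_of_continuousWithinAt_Ici hright s
  · have hcont : Continuous[sorgenfreyTopology, _] (id : ℝ → ℝ) :=
      continuous_id_iff_le.2 (le_iff_nhds _ _ |>.2 fun x =>
        (nhds_sorgenfreyTopology x).trans_le nhdsWithin_le_nhds)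
    have hmin (x : ℝ) : @IsLocalMin ℝ ℝ sorgenfreyTopology _ id x :=
      (nhds_sorgenfreyTopology x).le self_mem_nhdsWithin
    exact not_isCharming_of_forall_isLocalMin volume hcont hmin surjective_id
end

section
/- The image of a CL-charming space under a closed continuous map is CL-charming: if X is a CL-charming space, Z is a topological space, and f : X → Z is a continuous, closed surjection, then Z is CL-charming. -/
open Set Function TopologicalSpace

universe u

section Images

variable {X Z : Type u} [TopologicalSpace X] [TopologicalSpace Z] {f : X → Z}

theorem IsLindelofSigma.of_surjective (hX : IsLindelofSigma X) (hf : Continuous f)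
    (hsurj : Surjective f) : IsLindelofSigma Z := by
  obtain ⟨Y, tY, M, tM, hM, ⟨q, hq, hq_surj⟩, hg⟩ := hX
  exact ⟨Y, tY, M, tM, hM, ⟨f ∘ q, hf.comp hq, hsurj.comp hq_surj⟩, hg⟩

theorem IsLindelofSigma.image {s : Set X} (hs : IsLindelofSigma s) (hf : ContinuousOn f s) :
    IsLindelofSigma (f '' s) :=
  hs.of_surjective (f := imageFactorization f s) (hf.domRestrict.subtype_mk _)
    imageFactorization_surjective

/-- A *charming shell* of `X`: a Lindelöf Σ-subspace such that the complement of each of its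
open neighbourhoods is a Lindelöf Σ-space. A space is CL-charming when it has a closed charming
shell; closedness is kept apart because a shell is carried to a shell by every continuous
surjection, closed or not. -/
def IsCharmingShell (Y : Set X) : Prop :=
  IsLindelofSigma Y ∧ ∀ U : Set X, IsOpen U → Y ⊆ U → IsLindelofSigma ↥(Uᶜ)

theorem IsCharmingShell.image {Y : Set X} (hY : IsCharmingShell Y) (hf : Continuous f)
    (hsurj : Surjective f) : IsCharmingShell (f '' Y) := by
  obtain ⟨hY_sigma, hY_compl⟩ := hY
  refine ⟨hY_sigma.image hf.continuousOn, fun U hU hYU => ?_⟩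
  have h_preimage : IsLindelofSigma ↥(f ⁻¹' U)ᶜ :=
    hY_compl (f ⁻¹' U) (hU.preimage hf) (image_subset_iff.mp hYU)
  have h_image : f '' (f ⁻¹' U)ᶜ = Uᶜ := image_preimage_eq Uᶜ hsurj
  exact h_image ▸ h_preimage.image hf.continuousOn

theorem closed_image_of_CLCharming_general (hX : IsCLCharming X) (hf : Continuous f)
    (hclosed : IsClosedMap f) (hsurj : Surjective f) : IsCLCharming Z := by
  obtain ⟨Y, hY_closed, (hY_shell : IsCharmingShell Y)⟩ := hX
  exact ⟨f '' Y, hclosed Y hY_closed, hY_shell.image hf hsurj⟩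

end Images

/-- The image of a CL-charming space under a closed continuous surjection is CL-charming. -/
theorem closed_image_of_CLCharming {X : Type u} {Z : Type u}
    [TopologicalSpace X] [T35Space X] [TopologicalSpace Z] [T35Space Z]
    (hX : IsCLCharming X) (f : X → Z) (hf : Continuous f) (hclosed : IsClosedMap f)
    (hsurj : Surjective f) :
    IsCLCharming Z :=
  closed_image_of_CLCharming_general hX hf hclosed hsurj
end

section
/- The preimage of a CL-charming (resp. CO-charming) space under a perfect map is CL-charming (resp. CO-charming): if f : X → Z is a perfect surjection between topological spaces and Z is CL-charming, then X is CL-charming; and if Z is CO-charming, then X is CO-charming. -/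
open Set Function TopologicalSpace

universe u

/-!
If `Y → Z` and `Y → M` witness that `Z` is a Lindelöf Σ-space and `f : X → Z` is proper, then the
base change of `f` along `Y → Z` is a proper map from the fibre product `X ×_Z Y` to `Y`, so the
fibre product witnesses that `X` is a Lindelöf Σ-space; replacing `M` by the range of the composite
`X ×_Z Y → Y → M` takes care of surjectivity. Now let `S` be a shell of `Z`. For `U ⊇ f ⁻¹' S` open,
`f '' Uᶜ` is closed and disjoint from `S`, hence Lindelöf Σ, and `Uᶜ` is a closed subset of its
preimage. So `f ⁻¹' S` is a shell of `X`.
-/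

open Filter Topology

theorem perfectMap_iff_isProperMap {X Y : Type*} [TopologicalSpace X] [TopologicalSpace Y]
    {f : X → Y} : PerfectMap f ↔ IsProperMap f :=
  isProperMap_iff_isClosedMap_and_compact_fibers.symm

theorem isProperMap_pullback_snd {X Y Z : Type*} [TopologicalSpace X] [TopologicalSpace Y]
    [TopologicalSpace Z] {f : X → Z} {p : Y → Z} (hf : IsProperMap f) (hp : Continuous p) :
    IsProperMap (Pullback.snd : f.Pullback p → Y) := by
  refine isProperMap_iff_ultrafilter.2 ⟨continuous_snd.comp continuous_subtype_val, ?_⟩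
  intro 𝒰 y hy
  have f_fst_tendsto : Tendsto (f ∘ (Pullback.fst : f.Pullback p → X)) 𝒰 (𝓝 (p y)) := by
    rw [pullback_comm_sq f p]
    exact (hp.tendsto y).comp hy
  obtain ⟨x, hxy, hx⟩ :=
    hf.ultrafilter_le_nhds_of_tendsto (𝒰 := 𝒰.map Pullback.fst) f_fst_tendsto
  exact ⟨⟨(x, y), hxy⟩, rfl, tendsto_subtype_rng.2 (Tendsto.prodMk_nhds hx hy)⟩

namespace IsLindelofSigma

theorem of_continuous_surjective_of_isProperMap {X Y M : Type u} [TopologicalSpace X]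
    [TopologicalSpace Y] [TopologicalSpace M] [SecondCountableTopology M] {q : Y → X} {g : Y → M}
    (hq : Continuous q) (hq_surj : Surjective q) (hg : IsProperMap g) : IsLindelofSigma X := by
  have range_proper : IsProperMap (rangeFactorization g) :=
    isProperMap_of_comp_of_inj hg.continuous.rangeFactorization continuous_subtype_val hg
      Subtype.val_injective
  exact ⟨Y, inferInstance, range g, inferInstance, inferInstance, ⟨q, hq, hq_surj⟩,
    ⟨rangeFactorization g, perfectMap_iff_isProperMap.2 range_proper,
      rangeFactorization_surjective⟩⟩

theorem of_isProperMap {X Z : Type u} [TopologicalSpace X] [TopologicalSpace Z] {f : X → Z}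
    (hZ : IsLindelofSigma Z) (hf : IsProperMap f) : IsLindelofSigma X := by
  obtain ⟨Y, _, M, _, _, ⟨p, hp, p_surj⟩, ⟨g, hg, -⟩⟩ := hZ
  have fst_surj : Surjective (Pullback.fst : f.Pullback p → X) := fun x ↦
    let ⟨y, hy⟩ := p_surj (f x)
    ⟨⟨(x, y), hy.symm⟩, rfl⟩
  exact of_continuous_surjective_of_isProperMap (continuous_fst.comp continuous_subtype_val)
    fst_surj ((perfectMap_iff_isProperMap.1 hg).comp (isProperMap_pullback_snd hf hp))

theorem preimage {X Z : Type u} [TopologicalSpace X] [TopologicalSpace Z] {f : X → Z} {S : Set Z}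
    (hS : IsLindelofSigma S) (hf : IsProperMap f) : IsLindelofSigma ↥(f ⁻¹' S) :=
  hS.of_isProperMap (hf.restrictPreimage S)

theorem of_isClosed_subset {X : Type u} [TopologicalSpace X] {S C : Set X}
    (hS : IsLindelofSigma S) (hC : IsClosed C) (hCS : C ⊆ S) : IsLindelofSigma C :=
  hS.of_isProperMap
    (IsClosedEmbedding.inclusion hCS (hC.preimage continuous_subtype_val)).isProperMap

end IsLindelofSigma

/-- A *Lindelöf Σ-shell* of a space: a set `S` witnessing that the space is charming. The
CL-charming and CO-charming spaces are by definition those with a closed, respectively compact,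
shell. -/
def IsLindelofSigmaShell {X : Type u} [TopologicalSpace X] (S : Set X) : Prop :=
  IsLindelofSigma S ∧ ∀ U : Set X, IsOpen U → S ⊆ U → IsLindelofSigma ↥(Uᶜ)

theorem IsLindelofSigmaShell.preimage {X Z : Type u} [TopologicalSpace X] [TopologicalSpace Z]
    {f : X → Z} {S : Set Z} (hS : IsLindelofSigmaShell S) (hf : IsProperMap f) :
    IsLindelofSigmaShell (f ⁻¹' S) := by
  refine ⟨hS.1.preimage hf, fun U hU hSU ↦ ?_⟩
  have image_closed : IsClosed (f '' Uᶜ) := hf.isClosedMap _ hU.isClosed_compl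
  have shell_subset : S ⊆ (f '' Uᶜ)ᶜ := by
    rintro _ hz ⟨x, hxU, rfl⟩
    exact hxU (hSU hz)
  have image_sigma : IsLindelofSigma ↥(f '' Uᶜ) :=
    compl_compl (f '' Uᶜ) ▸ hS.2 _ image_closed.isOpen_compl shell_subset
  exact (image_sigma.preimage hf).of_isClosed_subset hU.isClosed_compl (subset_preimage_image f Uᶜ)

theorem perfect_preimage_of_CL_and_CO_charming_general {X Z : Type u} [TopologicalSpace X]
    [TopologicalSpace Z] (f : X → Z) (hf : PerfectMap f) :
    (IsCLCharming Z → IsCLCharming X) ∧ (IsCOCharming Z → IsCOCharming X) := by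
  have f_proper : IsProperMap f := perfectMap_iff_isProperMap.1 hf
  constructor
  · rintro ⟨S, S_closed, S_shell : IsLindelofSigmaShell S⟩
    exact ⟨f ⁻¹' S, S_closed.preimage f_proper.continuous, S_shell.preimage f_proper⟩
  · rintro ⟨S, S_compact, S_shell : IsLindelofSigmaShell S⟩
    exact ⟨f ⁻¹' S, f_proper.isCompact_preimage S_compact, S_shell.preimage f_proper⟩

/-- The preimage of a CL-charming (resp. CO-charming) space under a perfect surjection is
CL-charming (resp. CO-charming). -/
theorem perfect_preimage_of_CL_and_CO_charming {X : Type u} {Z : Type u}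
    [TopologicalSpace X] [T35Space X] [TopologicalSpace Z] [T35Space Z]
    (f : X → Z) (hf : PerfectMap f) (hsurj : Surjective f) :
    (IsCLCharming Z → IsCLCharming X) ∧ (IsCOCharming Z → IsCOCharming X) :=
  perfect_preimage_of_CL_and_CO_charming_general f hf
end
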